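/- Let B be a finite Blaschke product and let u ∈ 𝒟. If the weighted composition operator W_{u,B} : f ↦ u·(f∘B) is bounded on the Dirichlet space 𝒟, then u is a multiplier of 𝒟. -/

import Mathlib

open Complex MeasureTheory Metric Set Filter

noncomputable section

/-- The open unit disc in the complex plane. -/
def unitDisc : Set ℂ := Metric.ball 0 1

/-- The square of the Dirichlet norm:
`‖f‖²_𝒟 = |f(0)|² + ∫_𝔻 |f′(z)|² dA(z)`, with `A` normalized area measure. -/
def dirNormSq (f : ℂ → ℂ) : ℝ :=
  ‖f 0‖ ^ 2 + (1 / Real.pi) * ∫ z in unitDisc, ‖deriv f z‖ ^ 2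

/-- Membership in the Dirichlet space `𝒟`: `f` is holomorphic on `𝔻` and
`|f′|²` is integrable over `𝔻`. -/
def MemDirichlet (f : ℂ → ℂ) : Prop :=
  DifferentiableOn ℂ f unitDisc ∧
    IntegrableOn (fun z : ℂ => ‖deriv f z‖ ^ 2) unitDisc

/-- The `k`-th Taylor coefficient of `f` at `0`. -/
def taylorCoeff (f : ℂ → ℂ) (k : ℕ) : ℂ := iteratedDeriv k f 0 / (Nat.factorial k : ℂ)

/-- The square of the Hardy space `H²` norm: `Σ |a_k|²`. -/
def hardyNormSq (f : ℂ → ℂ) : ℝ := ∑' k : ℕ, ‖taylorCoeff f k‖ ^ 2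

/-- Membership in the Hardy space `H²`. -/
def MemHardy (f : ℂ → ℂ) : Prop :=
  DifferentiableOn ℂ f unitDisc ∧ Summable fun k : ℕ => ‖taylorCoeff f k‖ ^ 2

/-- The `H²` inner product `⟨f, g⟩ = Σ a_k \overline{b_k}`. -/
def hardyInner (f g : ℂ → ℂ) : ℂ :=
  ∑' k : ℕ, taylorCoeff f k * (starRingEnd ℂ) (taylorCoeff g k)

/-- `B` is a finite Blaschke product:
`B(z) = e^{iθ} ∏_{j=1}^{n} (a_j − z)/(1 − \overline{a_j} z)` with all `a_j ∈ 𝔻`. -/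
def IsFiniteBlaschke (B : ℂ → ℂ) : Prop :=
  ∃ (θ : ℝ) (n : ℕ) (a : Fin n → ℂ), (∀ j, ‖a j‖ < 1) ∧
    ∀ z ∈ unitDisc,
      B z = Complex.exp (θ * Complex.I) *
        ∏ j, (a j - z) / (1 - (starRingEnd ℂ) (a j) * z)

/-- Membership in the model space `K_B = H² ⊖ BH²`: `g ∈ H²` and `g ⟂ B·h`
for every `h ∈ H²`. -/
def MemModelSpace (B g : ℂ → ℂ) : Prop :=
  MemHardy g ∧ ∀ h : ℂ → ℂ, MemHardy h →
    hardyInner g (fun z => B z * h z) = 0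

/-- The weighted composition operator `W_{u,φ} : f ↦ u·(f∘φ)` is bounded
on the Dirichlet space: there is a constant `C` with
`‖u·(f∘φ)‖²_𝒟 ≤ C ‖f‖²_𝒟` (and `u·(f∘φ) ∈ 𝒟`) for all `f ∈ 𝒟`. -/
def WCOBounded (u φ : ℂ → ℂ) : Prop :=
  ∃ C : ℝ, 0 ≤ C ∧ ∀ f : ℂ → ℂ, MemDirichlet f →
    MemDirichlet (fun z => u z * f (φ z)) ∧
      dirNormSq (fun z => u z * f (φ z)) ≤ C * dirNormSq f

/-!
Since `u' · (f ∘ B) = (u · (f ∘ B))' - u · (f ∘ B)'` and `B` is finite-to-one, boundedness of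
`W_{u,B}` makes `f ↦ u' · (f ∘ B)` bounded from `𝒟` to `L²(𝔻)`; for `u` to be a multiplier we need
the same for `f ↦ u' · f`. By duality both bounds are bounds on the quadratic forms with kernels
`k(B z, B w)` and `k(z, w)`, multiplied by `u'` in each variable, where
`k(z, w) = 1 - log (1 - z w̄)` is the reproducing kernel of `𝒟`. From
`|1 - B(z) B(w)̄| ≤ A |1 - z w̄|`, and because `log` has bounded imaginary part here, we get
`|k(z, w)| ≤ K Re k(B z, B w)`. Hence the form of the second kernel at `g` is at most `K` times the
form of the first at `|g|`, and the bound carries over.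
-/

open scoped ENNReal Topology ComplexConjugate

section KernelDomination

variable {α 𝕜 H H' : Type*} [MeasurableSpace α] {μ : Measure α} [RCLike 𝕜]
  [NormedAddCommGroup H] [InnerProductSpace 𝕜 H] [NormedAddCommGroup H'] [InnerProductSpace 𝕜 H']

lemma lintegral_enorm_inner_sq_eq_ofReal {k : α → H} (hk : MemLp k 2 μ) (v : H) :
    ∫⁻ x, ‖inner 𝕜 (k x) v‖ₑ ^ 2 ∂μ = ENNReal.ofReal (∫ x, ‖inner 𝕜 (k x) v‖ ^ 2 ∂μ) := by
  have h := hk.inner_const (𝕜 := 𝕜) v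
  rw [ofReal_integral_eq_lintegral_ofReal ((memLp_two_iff_integrable_sq_norm h.1).1 h)
    (.of_forall fun x => by positivity)]
  simp only [ENNReal.ofReal_pow (norm_nonneg _), ofReal_norm]

variable [CompleteSpace H] [NormedSpace ℝ H] [CompleteSpace H'] [NormedSpace ℝ H']

variable (𝕜) in
lemma integral_re_inner_integral {F : α → H} (hF : Integrable F μ) (c : H) :
    ∫ x, RCLike.re (inner 𝕜 c (F x)) ∂μ = RCLike.re (inner 𝕜 c (∫ x, F x ∂μ)) := by
  rw [integral_re (hF.const_inner c), integral_inner hF]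

variable (𝕜) in
lemma integral_integral_re_inner {F : α → H} (hF : Integrable F μ) :
    ∫ x, ∫ y, RCLike.re (inner 𝕜 (F x) (F y)) ∂μ ∂μ = ‖∫ x, F x ∂μ‖ ^ 2 := by
  simp only [integral_re_inner_integral 𝕜 hF]
  simp only [← inner_re_symm (𝕜 := 𝕜) (∫ x, F x ∂μ)]
  rw [integral_re_inner_integral 𝕜 hF, inner_self_eq_norm_sq]

variable (𝕜) in
lemma norm_integral_sq_le_of_re_inner_le {F : α → H} {F' : α → H'} {K : ℝ}
    (hF : Integrable F μ) (hF' : Integrable F' μ)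
    (hK : ∀ᵐ x ∂μ, ∀ᵐ y ∂μ,
      RCLike.re (inner 𝕜 (F x) (F y)) ≤ K * RCLike.re (inner 𝕜 (F' x) (F' y))) :
    ‖∫ x, F x ∂μ‖ ^ 2 ≤ K * ‖∫ x, F' x ∂μ‖ ^ 2 := by
  rw [← integral_integral_re_inner 𝕜 hF, ← integral_integral_re_inner 𝕜 hF', ← integral_const_mul]
  refine integral_mono_ae ?_ ?_ (hK.mono fun x hx => ?_)
  · simp only [integral_re_inner_integral 𝕜 hF]
    exact (hF.inner_const _).re
  · simp only [integral_re_inner_integral 𝕜 hF']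
    exact (hF'.inner_const _).re.const_mul K
  · dsimp only
    rw [← integral_const_mul]
    exact integral_mono_ae (hF.const_inner _).re ((hF'.const_inner _).re.const_mul K) hx

lemma norm_integral_smul_sq_le_of_norm_inner_le {k : α → H} {k' : α → H'} {g : α → 𝕜} {K : ℝ}
    (hgk : Integrable (fun x => g x • k x) μ) (hgk' : Integrable (fun x => (‖g x‖ : 𝕜) • k' x) μ)
    (hkK : ∀ᵐ x ∂μ, ∀ᵐ y ∂μ, ‖inner 𝕜 (k x) (k y)‖ ≤ K * RCLike.re (inner 𝕜 (k' x) (k' y))) :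
    ‖∫ x, g x • k x ∂μ‖ ^ 2 ≤ K * ‖∫ x, (‖g x‖ : 𝕜) • k' x ∂μ‖ ^ 2 := by
  refine norm_integral_sq_le_of_re_inner_le 𝕜 hgk hgk' ?_
  filter_upwards [hkK] with x hx
  filter_upwards [hx] with y hxy
  calc RCLike.re (inner 𝕜 (g x • k x) (g y • k y))
      ≤ ‖inner 𝕜 (g x • k x) (g y • k y)‖ := RCLike.re_le_norm _
    _ = ‖g x‖ * ‖g y‖ * ‖inner 𝕜 (k x) (k y)‖ := by
      rw [inner_smul_left, inner_smul_right, norm_mul, norm_mul, RCLike.norm_conj, mul_assoc]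
    _ ≤ ‖g x‖ * ‖g y‖ * (K * RCLike.re (inner 𝕜 (k' x) (k' y))) := by gcongr
    _ = K * RCLike.re (inner 𝕜 ((‖g x‖ : 𝕜) • k' x) ((‖g y‖ : 𝕜) • k' y)) := by
      rw [inner_smul_left, inner_smul_right, RCLike.conj_ofReal, RCLike.re_ofReal_mul,
        RCLike.re_ofReal_mul]
      ring

lemma norm_integral_smul_sq_le {k : α → H} (hk : MemLp k 2 μ) {C : ℝ} (hC : 0 < C)
    (hkC : ∀ v, ∫ x, ‖inner 𝕜 (k x) v‖ ^ 2 ∂μ ≤ C * ‖v‖ ^ 2) {g : α → 𝕜} (hg : MemLp g 2 μ) :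
    ‖∫ x, g x • k x ∂μ‖ ^ 2 ≤ C * ∫ x, ‖g x‖ ^ 2 ∂μ := by
  set w := ∫ x, g x • k x ∂μ with hw
  have hgk : Integrable (fun x => g x • k x) μ := memLp_one_iff_integrable.1 (hk.smul hg)
  have hg2 : Integrable (fun x => ‖g x‖ ^ 2) μ := (memLp_two_iff_integrable_sq_norm hg.1).1 hg
  have hkw2 : Integrable (fun x => ‖inner 𝕜 (k x) w‖ ^ 2) μ :=
    (memLp_two_iff_integrable_sq_norm (hk.inner_const w).1).1 (hk.inner_const w)
  have hpt (x : α) : 2 * C * RCLike.re (inner 𝕜 w (g x • k x)) ≤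
      C ^ 2 * ‖g x‖ ^ 2 + ‖inner 𝕜 (k x) w‖ ^ 2 := by
    have h := RCLike.re_le_norm (inner 𝕜 w (g x • k x))
    rw [inner_smul_right, norm_mul, norm_inner_symm] at h
    rw [inner_smul_right]
    nlinarith [sq_nonneg (C * ‖g x‖ - ‖inner 𝕜 (k x) w‖)]
  have hint : 2 * C * ‖w‖ ^ 2 ≤ C ^ 2 * ∫ x, ‖g x‖ ^ 2 ∂μ + C * ‖w‖ ^ 2 := calc
    2 * C * ‖w‖ ^ 2 = ∫ x, 2 * C * RCLike.re (inner 𝕜 w (g x • k x)) ∂μ := by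
      rw [integral_const_mul, integral_re_inner_integral 𝕜 hgk, ← hw, inner_self_eq_norm_sq]
    _ ≤ ∫ x, (C ^ 2 * ‖g x‖ ^ 2 + ‖inner 𝕜 (k x) w‖ ^ 2) ∂μ :=
      integral_mono ((hgk.const_inner w).re.const_mul _) ((hg2.const_mul _).add hkw2) hpt
    _ ≤ C ^ 2 * ∫ x, ‖g x‖ ^ 2 ∂μ + C * ‖w‖ ^ 2 := by
      rw [integral_add (hg2.const_mul _) hkw2, integral_const_mul]
      gcongr
      exact hkC w
  refine le_of_mul_le_mul_left ?_ hC
  linarith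

lemma integral_norm_inner_sq_le_of_norm_inner_le {k : α → H} {k' : α → H'} (hk : MemLp k 2 μ)
    (hk' : MemLp k' 2 μ) {C K : ℝ} (hC : 0 < C) (hK : 0 ≤ K)
    (hkC : ∀ v, ∫ x, ‖inner 𝕜 (k' x) v‖ ^ 2 ∂μ ≤ C * ‖v‖ ^ 2)
    (hkK : ∀ᵐ x ∂μ, ∀ᵐ y ∂μ, ‖inner 𝕜 (k x) (k y)‖ ≤ K * RCLike.re (inner 𝕜 (k' x) (k' y)))
    (v : H) : ∫ x, ‖inner 𝕜 (k x) v‖ ^ 2 ∂μ ≤ K * C * ‖v‖ ^ 2 := by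
  set g : α → 𝕜 := fun x => inner 𝕜 (k x) v with hg_def
  set X : ℝ := ∫ x, ‖g x‖ ^ 2 ∂μ
  have hX : 0 ≤ X := integral_nonneg fun x => by positivity
  have hg : MemLp g 2 μ := hk.inner_const v
  have hg' : MemLp (fun x => (‖g x‖ : 𝕜)) 2 μ := hg.norm.ofReal
  have hgk : Integrable (fun x => g x • k x) μ := memLp_one_iff_integrable.1 (hk.smul hg)
  have hgk' : Integrable (fun x => (‖g x‖ : 𝕜) • k' x) μ :=
    memLp_one_iff_integrable.1 (hk'.smul hg')
  have hX_inner : X = RCLike.re (inner 𝕜 v (∫ x, g x • k x ∂μ)) := by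
    rw [← integral_re_inner_integral 𝕜 hgk]
    refine integral_congr_ae (.of_forall fun x => ?_)
    simp only [hg_def, inner_smul_right]
    rw [← inner_conj_symm v, RCLike.mul_conj, ← RCLike.ofReal_pow, RCLike.ofReal_re]
  have hdom : ‖∫ x, g x • k x ∂μ‖ ^ 2 ≤ K * ‖∫ x, (‖g x‖ : 𝕜) • k' x ∂μ‖ ^ 2 :=
    norm_integral_smul_sq_le_of_norm_inner_le hgk hgk' hkK
  have hw : ‖∫ x, (‖g x‖ : 𝕜) • k' x ∂μ‖ ^ 2 ≤ C * X := by
    simpa only [RCLike.norm_ofReal, abs_norm] using norm_integral_smul_sq_le hk' hC hkC hg'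
  have hX_sq : X ^ 2 ≤ ‖v‖ ^ 2 * (K * (C * X)) := calc
    X ^ 2 ≤ (‖v‖ * ‖∫ x, g x • k x ∂μ‖) ^ 2 := by
      gcongr
      exact hX_inner.trans_le (re_inner_le_norm _ _)
    _ ≤ ‖v‖ ^ 2 * (K * (C * X)) := by
      rw [mul_pow]
      gcongr
      exact hdom.trans (by gcongr)
  rcases hX.eq_or_lt with h0 | hpos
  · rw [← h0]; positivity
  · refine le_of_mul_le_mul_right ?_ hpos
    linarith

theorem lintegral_enorm_inner_sq_le_of_norm_inner_le [SigmaFinite μ] {k : α → H} {k' : α → H'}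
    (hk : AEStronglyMeasurable k μ) (hk' : AEStronglyMeasurable k' μ) {C K : ℝ} (hC : 0 < C)
    (hK : 0 ≤ K)
    (hkC : ∀ v, ∫⁻ x, ‖inner 𝕜 (k' x) v‖ₑ ^ 2 ∂μ ≤ ENNReal.ofReal (C * ‖v‖ ^ 2))
    (hkK : ∀ᵐ x ∂μ, ∀ᵐ y ∂μ, ‖inner 𝕜 (k x) (k y)‖ ≤ K * RCLike.re (inner 𝕜 (k' x) (k' y)))
    (v : H) : ∫⁻ x, ‖inner 𝕜 (k x) v‖ₑ ^ 2 ∂μ ≤ ENNReal.ofReal (K * C * ‖v‖ ^ 2) := by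
  set S : ℕ → Set α := fun n => spanningSets μ n ∩ ({x | ‖k x‖ ≤ n} ∩ {x | ‖k' x‖ ≤ n})
  have hS_mono : Monotone S := fun m n hmn => by
    have h : (m : ℝ) ≤ n := mod_cast hmn
    exact inter_subset_inter (monotone_spanningSets μ hmn) (inter_subset_inter
      (fun x hx => le_trans hx h) (fun x hx => le_trans hx h))
  have hS_iUnion : ⋃ n, S n = univ := by
    refine eq_univ_of_forall fun x => mem_iUnion.2 ?_
    obtain ⟨m, hm⟩ := exists_nat_ge (max ‖k x‖ ‖k' x‖)
    have h := (max_le_iff.1 hm)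
    have hle : (m : ℝ) ≤ max m (spanningSetsIndex μ x) := mod_cast le_max_left _ _
    exact ⟨max m (spanningSetsIndex μ x), monotone_spanningSets μ (le_max_right _ _)
      (mem_spanningSetsIndex μ x), mod_cast h.1.trans hle, mod_cast h.2.trans hle⟩
  rw [← setLIntegral_univ, ← hS_iUnion, setLIntegral_iUnion_of_directed _ hS_mono.directed_le]
  refine iSup_le fun n => ?_
  have : IsFiniteMeasure (μ.restrict (S n)) := isFiniteMeasure_restrict.2
    ((measure_mono inter_subset_left).trans_lt (measure_spanningSets_lt_top μ n)).ne
  have hS_meas : NullMeasurableSet (S n) μ :=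
    (measurableSet_spanningSets μ n).nullMeasurableSet.inter
      ((hk.norm.nullMeasurableSet_le aestronglyMeasurable_const).inter
        (hk'.norm.nullMeasurableSet_le aestronglyMeasurable_const))
  have hmem := ae_restrict_mem₀ hS_meas
  have hkn : MemLp k 2 (μ.restrict (S n)) := .of_bound hk.restrict n (hmem.mono fun x hx => hx.2.1)
  have hkn' : MemLp k' 2 (μ.restrict (S n)) :=
    .of_bound hk'.restrict n (hmem.mono fun x hx => hx.2.2)
  rw [lintegral_enorm_inner_sq_eq_ofReal hkn]
  refine ENNReal.ofReal_le_ofReal (integral_norm_inner_sq_le_of_norm_inner_le hkn hkn' hC hK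
    (fun w => ?_) ?_ v)
  · rw [← ENNReal.ofReal_le_ofReal_iff (by positivity), ← lintegral_enorm_inner_sq_eq_ofReal hkn']
    exact (setLIntegral_le_lintegral _ _).trans (hkC w)
  · exact ae_restrict_of_ae (hkK.mono fun x hx => ae_restrict_of_ae hx)

end KernelDomination

lemma mem_unitDisc {z : ℂ} : z ∈ unitDisc ↔ ‖z‖ < 1 := mem_ball_zero_iff

lemma isOpen_unitDisc : IsOpen unitDisc := isOpen_ball

lemma measurableSet_unitDisc : MeasurableSet unitDisc := measurableSet_ball

section Parseval

lemma sum_range_sq_norm_eq_circleAverage (a : ℕ → ℂ) (N : ℕ) : ∑ n ∈ Finset.range N, ‖a n‖ ^ 2 =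
    Real.circleAverage (fun z => ‖∑ n ∈ Finset.range N, a n * z ^ n‖ ^ 2) 0 1 := by
  set p : Polynomial ℂ := ∑ n ∈ Finset.range N, Polynomial.monomial n (a n) with hp
  have hcoeff (n : ℕ) : p.coeff n = if n < N then a n else 0 := by
    simp [hp, Polynomial.coeff_monomial]
  have heval (z : ℂ) : p.eval z = ∑ n ∈ Finset.range N, a n * z ^ n := by
    simp only [hp, Polynomial.eval_finsetSum, Polynomial.eval_monomial]
  have hsupport : p.support ⊆ Finset.range N := fun n hn => by
    by_contra h
    exact Polynomial.mem_support_iff.1 hn (by rw [hcoeff, if_neg (by simpa using h)])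
  simp only [← heval, ← p.sum_sq_norm_coeff_eq_circleAverage]
  rw [Finset.sum_subset hsupport fun n _ hn => by simp [Polynomial.notMem_support_iff.1 hn]]
  exact Finset.sum_congr rfl fun n hn => by rw [hcoeff, if_pos (Finset.mem_range.1 hn)]

lemma hasSum_sq_norm_circleAverage {a : ℕ → ℂ} (ha : Summable fun n => ‖a n‖) :
    HasSum (fun n => ‖a n‖ ^ 2) (Real.circleAverage (fun z => ‖∑' n, a n * z ^ n‖ ^ 2) 0 1) := by
  simp only [hasSum_iff_tendsto_nat_of_nonneg (fun n => sq_nonneg ‖a n‖),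
    sum_range_sq_norm_eq_circleAverage, Real.circleAverage_def]
  refine (intervalIntegral.tendsto_integral_filter_of_dominated_convergence
    (fun _ => (∑' n, ‖a n‖) ^ 2) (.of_forall fun N => ?_) (.of_forall fun N => ?_)
    intervalIntegrable_const ?_).const_smul _
  · exact Continuous.aestronglyMeasurable (by fun_prop)
  · refine .of_forall fun θ _ => ?_
    rw [norm_pow, norm_norm]
    gcongr
    refine (norm_sum_le _ _).trans ?_
    simp only [norm_mul, norm_pow, norm_circleMap_zero, abs_one, one_pow, mul_one]
    exact ha.sum_le_tsum _ fun n _ => norm_nonneg _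
  · refine .of_forall fun θ _ => (HasSum.tendsto_sum_nat ?_).norm.pow 2
    refine Summable.hasSum (.of_norm ?_)
    simpa only [norm_mul, norm_pow, norm_circleMap_zero, abs_one, one_pow, mul_one] using ha

end Parseval

section PowerSeries

variable {f : ℂ → ℂ}

lemma hasSum_taylorCoeff (hf : DifferentiableOn ℂ f unitDisc) {z : ℂ} (hz : z ∈ unitDisc) :
    HasSum (fun n => taylorCoeff f n * z ^ n) (f z) := by
  refine (Complex.hasSum_taylorSeries_on_ball hf hz).congr_fun fun n => ?_
  simp only [taylorCoeff, smul_eq_mul, sub_zero]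
  ring

lemma taylorCoeff_zero (f : ℂ → ℂ) : taylorCoeff f 0 = f 0 := by
  simp [taylorCoeff]

lemma taylorCoeff_deriv (f : ℂ → ℂ) (n : ℕ) :
    taylorCoeff (deriv f) n = (n + 1) * taylorCoeff f (n + 1) := by
  have hn : (n : ℂ) + 1 ≠ 0 := Nat.cast_add_one_ne_zero n
  have hn' : (n.factorial : ℂ) ≠ 0 := Nat.cast_ne_zero.2 n.factorial_ne_zero
  rw [taylorCoeff, taylorCoeff, iteratedDeriv_succ', Nat.factorial_succ]
  push_cast
  field_simp

lemma hasFPowerSeriesOnBall_of_hasSum {a : ℕ → ℂ}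
    (hf : ∀ z ∈ unitDisc, HasSum (fun n => a n * z ^ n) (f z)) :
    HasFPowerSeriesOnBall f (FormalMultilinearSeries.ofScalars ℂ a) 0 1 where
  r_le := by
    refine ENNReal.le_of_forall_nnreal_lt fun r hr => ?_
    refine FormalMultilinearSeries.le_radius_of_summable_norm _ ?_
    have hr' : ((r : ℝ) : ℂ) ∈ unitDisc := by simpa [mem_unitDisc] using hr
    simpa using (hf _ hr').summable.norm
  r_pos := one_pos
  hasSum := fun {y} hy => by
    have hy' : y ∈ unitDisc := by rwa [← ENNReal.ofReal_one, Metric.eball_ofReal] at hy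
    simpa [mul_comm] using hf y hy'

lemma differentiableOn_of_hasSum {a : ℕ → ℂ}
    (hf : ∀ z ∈ unitDisc, HasSum (fun n => a n * z ^ n) (f z)) :
    DifferentiableOn ℂ f unitDisc := by
  have h := (hasFPowerSeriesOnBall_of_hasSum hf).differentiableOn
  rwa [← ENNReal.ofReal_one, Metric.eball_ofReal] at h

lemma taylorCoeff_eq_of_hasSum {a : ℕ → ℂ}
    (hf : ∀ z ∈ unitDisc, HasSum (fun n => a n * z ^ n) (f z)) : taylorCoeff f = a := by
  have h := (hasFPowerSeriesOnBall_of_hasSum hf).hasFPowerSeriesAt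
  funext n
  have := congrArg (FormalMultilinearSeries.coeff · n)
    (h.analyticAt.hasFPowerSeriesAt.eq_formalMultilinearSeries h)
  simpa [taylorCoeff] using this

end PowerSeries

section AreaParseval

lemma setIntegral_Ioo_circleMap (f : ℂ → ℝ) (r : ℝ) :
    ∫ θ in Ioo (-Real.pi) Real.pi, f (circleMap 0 r θ) =
      2 * Real.pi * Real.circleAverage f 0 r := by
  have hper : Function.Periodic (fun θ => f (circleMap 0 r θ)) (2 * Real.pi) := fun θ =>
    congrArg f (periodic_circleMap 0 r θ)
  rw [← integral_Ioc_eq_integral_Ioo, ← intervalIntegral.integral_of_le (by linarith [Real.pi_pos]),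
    Real.circleAverage_def, smul_eq_mul, mul_inv_cancel_left₀ (by positivity)]
  convert hper.intervalIntegral_add_eq (-Real.pi) 0 using 2 <;> ring

lemma lintegral_circleMap_enorm_sq {f : ℂ → ℂ} (hf : DifferentiableOn ℂ f unitDisc) {r : ℝ}
    (hr0 : 0 ≤ r) (hr1 : r < 1) :
    ∫⁻ θ in Ioo (-Real.pi) Real.pi, ‖f (circleMap 0 r θ)‖ₑ ^ 2 =
      ∑' n, ENNReal.ofReal (2 * Real.pi * ‖taylorCoeff f n‖ ^ 2 * r ^ (2 * n)) := by
  have hmem (θ : ℝ) : circleMap 0 r θ ∈ unitDisc := by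
    rwa [mem_unitDisc, norm_circleMap_zero, abs_of_nonneg hr0]
  have hcont : Continuous fun θ => ‖f (circleMap 0 r θ)‖ ^ 2 :=
    ((hf.continuousOn.comp_continuous (continuous_circleMap 0 r) hmem).norm.pow 2)
  have hint : IntegrableOn (fun θ => ‖f (circleMap 0 r θ)‖ ^ 2) (Ioo (-Real.pi) Real.pi) :=
    hcont.continuousOn.integrableOn_Icc.mono_set Ioo_subset_Icc_self
  have hnorm : ‖(r : ℂ)‖ = r := by rw [norm_real, Real.norm_of_nonneg hr0]
  have hsum : HasSum (fun n => ‖taylorCoeff f n‖ ^ 2 * r ^ (2 * n))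
      (Real.circleAverage (fun z => ‖f z‖ ^ 2) 0 r) := by
    have hs : Summable fun n => ‖taylorCoeff f n * (r : ℂ) ^ n‖ :=
      (hasSum_taylorCoeff hf (by rwa [mem_unitDisc, hnorm])).summable.norm
    convert hasSum_sq_norm_circleAverage hs using 1
    · funext n
      rw [norm_mul, norm_pow, hnorm, mul_pow, ← pow_mul, mul_comm n]
    · rw [Real.circleAverage_eq_circleAverage_zero_one]
      refine Real.circleAverage_congr_sphere fun z hz => ?_
      have hz' : (r : ℂ) * z ∈ unitDisc := by
        rw [mem_sphere_zero_iff_norm, abs_one] at hz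
        rwa [mem_unitDisc, norm_mul, hnorm, hz, mul_one]
      simp only [add_zero, ← (hasSum_taylorCoeff hf hz').tsum_eq, mul_pow, mul_assoc]
  simp only [← ofReal_norm, ← ENNReal.ofReal_pow (norm_nonneg _)]
  rw [← ofReal_integral_eq_lintegral_ofReal hint (.of_forall fun θ => by positivity),
    setIntegral_Ioo_circleMap (fun z => ‖f z‖ ^ 2), ← (hsum.mul_left (2 * Real.pi)).tsum_eq,
    ENNReal.ofReal_tsum_of_nonneg (fun n => by positivity) (hsum.mul_left _).summable]
  simp only [mul_assoc]

lemma lintegral_unitDisc_eq_lintegral_circleMap {g : ℂ → ℝ≥0∞} (hg : ContinuousOn g unitDisc) :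
    ∫⁻ z in unitDisc, g z = ∫⁻ r in Ioo (0 : ℝ) 1,
      ENNReal.ofReal r * ∫⁻ θ in Ioo (-Real.pi) Real.pi, g (circleMap 0 r θ) := by
  set c : ℝ × ℝ → ℂ := fun p => circleMap 0 p.1 p.2 with hc
  have hc_meas : Continuous c := by unfold c circleMap; fun_prop
  have hc_polar (p : ℝ × ℝ) : Complex.polarCoord.symm p = c p := by
    simp [hc, circleMap, Complex.polarCoord_symm_apply, Complex.exp_mul_I]
  have hc_mem {p : ℝ × ℝ} (hp : 0 < p.1) : c p ∈ unitDisc ↔ p.1 < 1 := by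
    rw [mem_unitDisc, norm_circleMap_zero, abs_of_pos hp]
  have hg_comp : ContinuousOn (fun p => g (c p)) (Ioo 0 1 ×ˢ Ioo (-Real.pi) Real.pi) :=
    hg.comp hc_meas.continuousOn fun p hp => (hc_mem hp.1.1).2 hp.1.2
  have hS : MeasurableSet (Ioo (0 : ℝ) 1 ×ˢ Ioo (-Real.pi) Real.pi) :=
    measurableSet_Ioo.prod measurableSet_Ioo
  calc ∫⁻ z in unitDisc, g z
      = ∫⁻ p in polarCoord.target, ENNReal.ofReal p.1 * unitDisc.indicator g (c p) := by
        rw [← lintegral_indicator measurableSet_unitDisc,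
          ← Complex.lintegral_comp_polarCoord_symm]
        simp only [hc_polar, smul_eq_mul]
    _ = ∫⁻ p in Ioo 0 1 ×ˢ Ioo (-Real.pi) Real.pi, ENNReal.ofReal p.1 * g (c p) := by
        rw [← lintegral_indicator polarCoord.open_target.measurableSet, ← lintegral_indicator hS]
        refine lintegral_congr fun p => ?_
        by_cases hp : 0 < p.1
        · simp only [indicator, polarCoord_target, mem_prod, mem_Ioi, mem_Ioo, hp, hc_mem hp,
            true_and]
          split_ifs <;> simp_all only [mul_zero, not_true_eq_false, and_self, and_false, false_and]
        · simp [polarCoord_target, hp]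
    _ = ∫⁻ r in Ioo (0 : ℝ) 1, ∫⁻ θ in Ioo (-Real.pi) Real.pi, ENNReal.ofReal r * g (c (r, θ)) :=
        setLIntegral_prod _ ((measurable_fst.ennreal_ofReal.aemeasurable).mul
          (hg_comp.aemeasurable hS))
    _ = _ := by simp only [lintegral_const_mul' _ _ ENNReal.ofReal_ne_top, hc]

lemma setLIntegral_Ioo_pow (n : ℕ) :
    ∫⁻ r in Ioo (0 : ℝ) 1, ENNReal.ofReal (r ^ n) = ENNReal.ofReal (1 / (n + 1)) := by
  rw [← ofReal_integral_eq_lintegral_ofReal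
      ((continuous_pow n).continuousOn.integrableOn_Icc.mono_set Ioo_subset_Icc_self)
      (ae_restrict_of_forall_mem measurableSet_Ioo fun r hr => pow_nonneg hr.1.le n),
    ← integral_Ioc_eq_integral_Ioo, ← intervalIntegral.integral_of_le zero_le_one, integral_pow]
  simp

theorem lintegral_unitDisc_enorm_sq {f : ℂ → ℂ} (hf : DifferentiableOn ℂ f unitDisc) :
    ∫⁻ z in unitDisc, ‖f z‖ₑ ^ 2 =
      ∑' n : ℕ, ENNReal.ofReal (Real.pi / (n + 1) * ‖taylorCoeff f n‖ ^ 2) := by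
  have hcont : ContinuousOn (fun z => ‖f z‖ₑ ^ 2) unitDisc :=
    (ENNReal.continuous_pow 2).comp_continuousOn hf.continuousOn.enorm
  calc ∫⁻ z in unitDisc, ‖f z‖ₑ ^ 2
      = ∫⁻ r in Ioo (0 : ℝ) 1, ENNReal.ofReal r *
          ∫⁻ θ in Ioo (-Real.pi) Real.pi, ‖f (circleMap 0 r θ)‖ₑ ^ 2 :=
        lintegral_unitDisc_eq_lintegral_circleMap hcont
    _ = ∫⁻ r in Ioo (0 : ℝ) 1, ∑' n, ENNReal.ofReal (2 * Real.pi * ‖taylorCoeff f n‖ ^ 2) *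
          ENNReal.ofReal (r ^ (2 * n + 1)) := by
        refine setLIntegral_congr_fun measurableSet_Ioo fun r hr => ?_
        have hr0 : 0 ≤ r := hr.1.le
        simp only [lintegral_circleMap_enorm_sq hf hr0 hr.2, ← ENNReal.tsum_mul_left]
        refine tsum_congr fun n => ?_
        rw [← ENNReal.ofReal_mul hr0, ← ENNReal.ofReal_mul (by positivity)]
        ring_nf
    _ = ∑' n : ℕ, ENNReal.ofReal (Real.pi / (n + 1) * ‖taylorCoeff f n‖ ^ 2) := by
        rw [lintegral_tsum fun n => by fun_prop]
        refine tsum_congr fun n => ?_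
        rw [lintegral_const_mul _ (by fun_prop), setLIntegral_Ioo_pow,
          ← ENNReal.ofReal_mul (by positivity)]
        congr 1
        push_cast
        field_simp
        ring

end AreaParseval

section DirichletSpace

variable {f g : ℂ → ℂ}

lemma MemDirichlet.congr (hf : MemDirichlet f) (h : EqOn f g unitDisc) : MemDirichlet g := by
  refine ⟨hf.1.congr h.symm, hf.2.congr_fun (fun z hz => ?_) measurableSet_unitDisc⟩
  dsimp only
  rw [h.deriv isOpen_unitDisc hz]

lemma dirNormSq_congr (h : EqOn f g unitDisc) : dirNormSq f = dirNormSq g := by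
  have h0 : f 0 = g 0 := h (mem_ball_self one_pos)
  rw [dirNormSq, dirNormSq, h0, setIntegral_congr_fun measurableSet_unitDisc fun z hz => ?_]
  rw [h.deriv isOpen_unitDisc hz]

lemma memDirichlet_const (c : ℂ) : MemDirichlet fun _ => c :=
  ⟨differentiableOn_const c, by simp⟩

lemma dirNormSq_nonneg (f : ℂ → ℂ) : 0 ≤ dirNormSq f := by
  unfold dirNormSq
  positivity

lemma memDirichlet_iff_lintegral_ne_top :
    MemDirichlet f ↔ DifferentiableOn ℂ f unitDisc ∧ ∫⁻ z in unitDisc, ‖deriv f z‖ₑ ^ 2 ≠ ∞ := by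
  refine and_congr_right fun hf => ?_
  have hmeas : AEStronglyMeasurable (deriv f) (volume.restrict unitDisc) :=
    (hf.deriv isOpen_unitDisc).continuousOn.aestronglyMeasurable measurableSet_unitDisc
  have hsq : AEStronglyMeasurable (fun z => ‖deriv f z‖ ^ 2) (volume.restrict unitDisc) :=
    hmeas.norm.pow 2
  simp only [IntegrableOn, Integrable, hsq, true_and, hasFiniteIntegral_iff_enorm, enorm_pow,
    enorm_norm, lt_top_iff_ne_top]

lemma MemDirichlet.lintegral_enorm_deriv_sq_eq_ofReal (hf : MemDirichlet f) :
    ∫⁻ z in unitDisc, ‖deriv f z‖ₑ ^ 2 = ENNReal.ofReal (∫ z in unitDisc, ‖deriv f z‖ ^ 2) := by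
  rw [ofReal_integral_eq_lintegral_ofReal hf.2 (.of_forall fun z => by positivity)]
  simp only [ENNReal.ofReal_pow (norm_nonneg _), ofReal_norm]

lemma MemDirichlet.lintegral_enorm_deriv_sq_le (hf : MemDirichlet f) :
    ∫⁻ z in unitDisc, ‖deriv f z‖ₑ ^ 2 ≤ ENNReal.ofReal (Real.pi * dirNormSq f) := by
  rw [hf.lintegral_enorm_deriv_sq_eq_ofReal, dirNormSq, mul_add, one_div,
    mul_inv_cancel_left₀ Real.pi_ne_zero]
  exact ENNReal.ofReal_le_ofReal (le_add_of_nonneg_left (by positivity))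

/-- The weights `max 1 n` of the Dirichlet norm in Taylor coefficients:
`‖f‖²_𝒟 = ∑ max 1 n * |aₙ|²`. -/
def dirichletWeight (n : ℕ) : ℝ := max 1 n

lemma dirichletWeight_pos (n : ℕ) : 0 < dirichletWeight n :=
  one_pos.trans_le (le_max_left _ _)

lemma dirichletWeight_zero : dirichletWeight 0 = 1 := by simp [dirichletWeight]

lemma dirichletWeight_succ (n : ℕ) : dirichletWeight (n + 1) = n + 1 := by
  simp [dirichletWeight]

lemma lintegral_enorm_deriv_sq (hf : DifferentiableOn ℂ f unitDisc) :
    ∫⁻ z in unitDisc, ‖deriv f z‖ₑ ^ 2 = ∑' n : ℕ, ENNReal.ofReal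
      (Real.pi * (dirichletWeight (n + 1) * ‖taylorCoeff f (n + 1)‖ ^ 2)) := by
  rw [lintegral_unitDisc_enorm_sq (hf.deriv isOpen_unitDisc)]
  refine tsum_congr fun n => ?_
  have hn : ‖(n : ℂ) + 1‖ = n + 1 := by exact_mod_cast Complex.norm_natCast (n + 1)
  rw [taylorCoeff_deriv, dirichletWeight_succ, norm_mul, hn]
  field_simp

lemma memDirichlet_iff_summable : MemDirichlet f ↔ DifferentiableOn ℂ f unitDisc ∧
    Summable fun n => dirichletWeight n * ‖taylorCoeff f n‖ ^ 2 := by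
  rw [memDirichlet_iff_lintegral_ne_top]
  refine and_congr_right fun hf => ?_
  have hnonneg (n : ℕ) :
      0 ≤ Real.pi * (dirichletWeight (n + 1) * ‖taylorCoeff f (n + 1)‖ ^ 2) := by
    have := (dirichletWeight_pos (n + 1)).le
    positivity
  rw [lintegral_enorm_deriv_sq hf, ← summable_nat_add_iff 1,
    ← summable_mul_left_iff Real.pi_ne_zero]
  refine ⟨fun h => ?_, Summable.tsum_ofReal_ne_top⟩
  simpa only [ENNReal.toReal_ofReal (hnonneg _)] using ENNReal.summable_toReal h

lemma MemDirichlet.hasSum_dirNormSq (hf : MemDirichlet f) :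
    HasSum (fun n => dirichletWeight n * ‖taylorCoeff f n‖ ^ 2) (dirNormSq f) := by
  have hs := (memDirichlet_iff_summable.1 hf).2
  have hs' := ((summable_nat_add_iff 1).2 hs).mul_left Real.pi
  have hw (n : ℕ) : 0 ≤ dirichletWeight n * ‖taylorCoeff f n‖ ^ 2 :=
    mul_nonneg (dirichletWeight_pos n).le (sq_nonneg _)
  have hint : ∫ z in unitDisc, ‖deriv f z‖ ^ 2 =
      Real.pi * ∑' n, dirichletWeight (n + 1) * ‖taylorCoeff f (n + 1)‖ ^ 2 := by
    rw [← tsum_mul_left, ← ENNReal.ofReal_eq_ofReal_iff (integral_nonneg fun z => by positivity)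
      (tsum_nonneg fun n => mul_nonneg Real.pi_nonneg (hw (n + 1))),
      ← hf.lintegral_enorm_deriv_sq_eq_ofReal, lintegral_enorm_deriv_sq hf.1,
      ENNReal.ofReal_tsum_of_nonneg (fun n => mul_nonneg Real.pi_nonneg (hw (n + 1))) hs']
  rw [dirNormSq, hint, one_div, inv_mul_cancel_left₀ Real.pi_ne_zero, ← taylorCoeff_zero f]
  convert hs.hasSum using 1
  rw [hs.tsum_eq_zero_add, dirichletWeight_zero, one_mul]

end DirichletSpace

section LogKernel

/-- The function `1 + log (1 / (1 - x)) = ∑ xⁿ / max 1 n`; the reproducing kernel of the Dirichlet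
space is `logKernel (z * conj w)`. -/
def logKernel (x : ℂ) : ℂ := 1 - Complex.log (1 - x)

variable {x y : ℂ}

lemma hasSum_logKernel (hx : ‖x‖ < 1) :
    HasSum (fun n => x ^ n / (dirichletWeight n : ℂ)) (logKernel x) := by
  have h := (hasSum_ite_eq 0 (1 : ℂ)).add (Complex.hasSum_taylorSeries_neg_log hx)
  rw [← sub_eq_add_neg] at h
  refine h.congr_fun fun n => ?_
  cases n with
  | zero => simp [dirichletWeight_zero]
  | succ n => simp [dirichletWeight_succ]

lemma re_logKernel (x : ℂ) : (logKernel x).re = 1 - Real.log ‖1 - x‖ := by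
  simp [logKernel, Complex.log_re]

lemma norm_one_sub_pos (hx : ‖x‖ < 1) : 0 < ‖1 - x‖ :=
  norm_pos_iff.2 (sub_ne_zero.2 fun h => by simp [← h] at hx)

lemma re_logKernel_ge (hx : ‖x‖ < 1) : 3 / 10 ≤ (logKernel x).re := by
  have hle : ‖1 - x‖ ≤ 2 := (norm_sub_le 1 x).trans (by rw [norm_one]; linarith)
  have hlog := Real.log_le_log (norm_one_sub_pos hx) hle
  rw [re_logKernel]
  linarith [Real.log_two_lt_d9]

lemma abs_im_logKernel_le (x : ℂ) : |(logKernel x).im| ≤ 4 := by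
  rw [logKernel, sub_im, one_im, zero_sub, abs_neg, Complex.log_im]
  exact (Complex.abs_arg_le_pi _).trans Real.pi_le_four

lemma norm_logKernel_le {A : ℝ} (hA : 1 ≤ A) (hx : ‖x‖ < 1) (hy : ‖y‖ < 1)
    (hxy : ‖1 - y‖ ≤ A * ‖1 - x‖) :
    ‖logKernel x‖ ≤ (17 + 4 * Real.log A) * (logKernel y).re := by
  have hlog : (logKernel x).re ≤ (logKernel y).re + Real.log A := by
    have h := Real.log_le_log (norm_one_sub_pos hy) hxy
    rw [Real.log_mul (by positivity) (norm_one_sub_pos hx).ne'] at h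
    rw [re_logKernel, re_logKernel]
    linarith
  have hnorm := Complex.norm_le_abs_re_add_abs_im (logKernel x)
  rw [abs_of_nonneg ((by norm_num : (0 : ℝ) ≤ 3 / 10).trans (re_logKernel_ge hx))] at hnorm
  nlinarith [Real.log_nonneg hA, re_logKernel_ge hy, abs_im_logKernel_le x]

lemma continuousAt_logKernel (hx : ‖x‖ < 1) : ContinuousAt logKernel x := by
  refine continuousAt_const.sub (ContinuousAt.clog (by fun_prop) (.inl ?_))
  rw [sub_re, one_re, sub_pos]
  exact (re_le_norm x).trans_lt hx

end LogKernel

section DirichletKernel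

variable {z w : ℂ}

lemma norm_mul_conj_lt_one (hz : z ∈ unitDisc) (hw : w ∈ unitDisc) : ‖z * conj w‖ < 1 := by
  rw [mem_unitDisc] at hz hw
  rw [norm_mul, RCLike.norm_conj]
  exact mul_lt_one_of_nonneg_of_lt_one_left (norm_nonneg z) hz hw.le

lemma memℓp_dirichletKernel (hz : z ∈ unitDisc) :
    Memℓp (fun n => conj z ^ n / (√(dirichletWeight n) : ℂ)) 2 := by
  refine memℓp_gen (((hasSum_logKernel (norm_mul_conj_lt_one hz hz)).summable.norm).congr
    fun n => ?_)
  rw [ENNReal.toReal_ofNat, Real.rpow_two, norm_div, norm_div, div_pow, norm_real, norm_real,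
    Real.norm_of_nonneg (Real.sqrt_nonneg _), Real.sq_sqrt (dirichletWeight_pos n).le,
    Real.norm_of_nonneg (dirichletWeight_pos n).le, mul_pow, norm_mul, norm_pow, norm_pow,
    RCLike.norm_conj, ← sq]

open Classical in
/-- The reproducing kernel of the Dirichlet space at the point `z`, as a vector of `ℓ²`: `ℓ²` is
identified with `𝒟` through the orthonormal basis `zⁿ / √(dirichletWeight n)`. It is set to `0`
outside the disc. -/
def dirichletKernel (z : ℂ) : lp (fun _ : ℕ => ℂ) 2 :=
  if hz : z ∈ unitDisc then ⟨_, memℓp_dirichletKernel hz⟩ else 0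

lemma dirichletKernel_apply (hz : z ∈ unitDisc) (n : ℕ) :
    dirichletKernel z n = conj z ^ n / (√(dirichletWeight n) : ℂ) := by
  rw [dirichletKernel, dif_pos hz]

lemma hasSum_inner_dirichletKernel (hz : z ∈ unitDisc) (v : lp (fun _ : ℕ => ℂ) 2) :
    HasSum (fun n => v n / (√(dirichletWeight n) : ℂ) * z ^ n) (inner ℂ (dirichletKernel z) v) := by
  refine (lp.hasSum_inner (𝕜 := ℂ) (dirichletKernel z) v).congr_fun fun n => ?_
  rw [RCLike.inner_apply, dirichletKernel_apply hz, map_div₀, map_pow, conj_conj, conj_ofReal]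
  ring

lemma inner_dirichletKernel (hz : z ∈ unitDisc) (hw : w ∈ unitDisc) :
    inner ℂ (dirichletKernel z) (dirichletKernel w) = logKernel (z * conj w) := by
  refine (hasSum_inner_dirichletKernel hz _).unique
    ((hasSum_logKernel (norm_mul_conj_lt_one hz hw)).congr_fun fun n => ?_)
  have hsqrt : (√(dirichletWeight n) : ℂ) * √(dirichletWeight n) = dirichletWeight n :=
    mod_cast Real.mul_self_sqrt (dirichletWeight_pos n).le
  rw [dirichletKernel_apply hw, ← hsqrt, div_div, mul_pow]
  ring

lemma norm_dirichletKernel_sq (hz : z ∈ unitDisc) :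
    ‖dirichletKernel z‖ ^ 2 = (logKernel (z * conj z)).re := by
  rw [← inner_dirichletKernel hz hz]
  exact (inner_self_eq_norm_sq (𝕜 := ℂ) _).symm

lemma dirichletKernel_ne_zero (hz : z ∈ unitDisc) : dirichletKernel z ≠ 0 := fun h => by
  have hge := re_logKernel_ge (norm_mul_conj_lt_one hz hz)
  rw [← norm_dirichletKernel_sq hz, h] at hge
  norm_num at hge

lemma continuousOn_dirichletKernel : ContinuousOn dirichletKernel unitDisc := by
  intro w hw
  have hexpand (z : ℂ) (hz : z ∈ unitDisc) : ‖dirichletKernel z - dirichletKernel w‖ ^ 2 =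
      (logKernel (z * conj z)).re - 2 * (logKernel (z * conj w)).re +
        (logKernel (w * conj w)).re := by
    rw [norm_sub_sq (𝕜 := ℂ), inner_dirichletKernel hz hw, norm_dirichletKernel_sq hz,
      norm_dirichletKernel_sq hw]
    rfl
  have hlim : Tendsto (fun z => ‖dirichletKernel z - dirichletKernel w‖ ^ 2) (𝓝[unitDisc] w)
      (𝓝 0) := by
    have hcont : ContinuousAt (fun z => (logKernel (z * conj z)).re -
        2 * (logKernel (z * conj w)).re + (logKernel (w * conj w)).re) w := by
      have hlog := continuousAt_logKernel (norm_mul_conj_lt_one hw hw)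
      have hdiag : ContinuousAt (fun z => logKernel (z * conj z)) w :=
        ContinuousAt.comp (f := fun z => z * conj z) hlog
          (continuousAt_id.mul continuous_conj.continuousAt)
      have hrow : ContinuousAt (fun z => logKernel (z * conj w)) w :=
        ContinuousAt.comp (f := fun z => z * conj w) hlog (continuousAt_id.mul_const _)
      exact ((continuous_re.continuousAt.comp hdiag).sub
        ((continuous_re.continuousAt.comp hrow).const_mul 2)).add continuousAt_const
    refine ((hcont.tendsto.mono_left nhdsWithin_le_nhds).congr'
      (eventually_mem_nhdsWithin.mono fun z hz => (hexpand z hz).symm)).trans_eq ?_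
    ring_nf
  rw [ContinuousWithinAt, tendsto_iff_norm_sub_tendsto_zero]
  simpa using hlim.sqrt

lemma inner_dirichletKernel_memDirichlet (v : lp (fun _ : ℕ => ℂ) 2) :
    MemDirichlet (fun z => inner ℂ (dirichletKernel z) v) ∧
      dirNormSq (fun z => inner ℂ (dirichletKernel z) v) = ‖v‖ ^ 2 := by
  have hf := fun z hz => hasSum_inner_dirichletKernel (z := z) hz v
  have hsum : HasSum (fun n => dirichletWeight n *
      ‖taylorCoeff (fun z => inner ℂ (dirichletKernel z) v) n‖ ^ 2) (‖v‖ ^ 2) := by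
    have hv := lp.hasSum_norm (by norm_num) v
    simp only [ENNReal.toReal_ofNat, Real.rpow_two] at hv
    refine hv.congr_fun fun n => ?_
    rw [taylorCoeff_eq_of_hasSum hf, norm_div, norm_real, div_pow,
      Real.norm_of_nonneg (Real.sqrt_nonneg _), Real.sq_sqrt (dirichletWeight_pos n).le,
      mul_div_cancel₀ _ (dirichletWeight_pos n).ne']
  have hmem := memDirichlet_iff_summable.2 ⟨differentiableOn_of_hasSum hf, hsum.summable⟩
  exact ⟨hmem, hmem.hasSum_dirNormSq.unique hsum⟩

lemma MemDirichlet.exists_inner_dirichletKernel_eq {f : ℂ → ℂ} (hf : MemDirichlet f) :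
    ∃ v : lp (fun _ : ℕ => ℂ) 2, ‖v‖ ^ 2 = dirNormSq f ∧
      ∀ z ∈ unitDisc, inner ℂ (dirichletKernel z) v = f z := by
  have hmem : Memℓp (fun n => (√(dirichletWeight n) : ℂ) * taylorCoeff f n) 2 := by
    refine memℓp_gen (hf.hasSum_dirNormSq.summable.congr fun n => ?_)
    rw [ENNReal.toReal_ofNat, Real.rpow_two, norm_mul, mul_pow, norm_real,
      Real.norm_of_nonneg (Real.sqrt_nonneg _), Real.sq_sqrt (dirichletWeight_pos n).le]
  set v : lp (fun _ : ℕ => ℂ) 2 := ⟨_, hmem⟩ with hv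
  have hval (z : ℂ) (hz : z ∈ unitDisc) : inner ℂ (dirichletKernel z) v = f z := by
    refine (hasSum_inner_dirichletKernel hz v).unique
      ((hasSum_taylorCoeff hf.1 hz).congr_fun fun n => ?_)
    have hsqrt : (√(dirichletWeight n) : ℂ) ≠ 0 :=
      ofReal_ne_zero.2 (Real.sqrt_pos.2 (dirichletWeight_pos n)).ne'
    simp only [hv, mul_div_cancel_left₀ _ hsqrt]
  refine ⟨v, ?_, hval⟩
  rw [← (inner_dirichletKernel_memDirichlet v).2]
  exact dirNormSq_congr hval

end DirichletKernel

section AreaFormula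

lemma exists_measurable_partition_injOn {X Y : Type*} [TopologicalSpace X]
    [SecondCountableTopology X] [MeasurableSpace X] [OpensMeasurableSpace X] {f : X → Y} {s : Set X}
    (hs : MeasurableSet s) (hf : ∀ x ∈ s, ∃ V ∈ 𝓝 x, InjOn f V) :
    ∃ S : ℕ → Set X, (∀ i, MeasurableSet (S i)) ∧ Pairwise (Function.onFun Disjoint S) ∧
      (∀ i, InjOn f (S i)) ∧ ⋃ i, S i = s := by
  rcases s.eq_empty_or_nonempty with rfl | hne
  · exact ⟨fun _ => ∅, fun _ => .empty, fun _ _ _ => disjoint_bot_left, fun _ => injOn_empty f,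
      iUnion_empty⟩
  choose! V hV hVf using hf
  obtain ⟨t, hts, ht, hcover⟩ := TopologicalSpace.countable_cover_nhdsWithin
    fun x hx => mem_nhdsWithin_of_mem_nhds (interior_mem_nhds.2 (hV x hx))
  have ht_ne : t.Nonempty := by
    obtain ⟨x, hx⟩ := hne
    obtain ⟨y, hy, -⟩ := mem_iUnion₂.1 (hcover hx)
    exact ⟨y, hy⟩
  obtain ⟨e, rfl⟩ := ht.exists_eq_range ht_ne
  set D := disjointed fun i => interior (V (e i)) with hD
  refine ⟨fun i => s ∩ D i,
    fun i => hs.inter (.disjointed (fun i => isOpen_interior.measurableSet) i),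
    fun i j hij => (disjoint_disjointed _ hij).mono inter_subset_right inter_subset_right,
    fun i => (hVf _ (hts (mem_range_self i))).mono
      (inter_subset_right.trans ((disjointed_subset _ i).trans interior_subset)), ?_⟩
  rw [← inter_iUnion, hD, iUnion_disjointed, inter_eq_left]
  simpa only [biUnion_range] using hcover

lemma tsum_indicator_image_le {X Y : Type*} {f : X → Y} {s : Set X} {S : ℕ → Set X}
    (hS : Pairwise (Function.onFun Disjoint S)) (hSs : ⋃ i, S i = s) {n : ℕ}
    (hn : ∀ y, (s ∩ f ⁻¹' {y}).encard ≤ n) (g : Y → ℝ≥0∞) (y : Y) :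
    ∑' i, (f '' S i).indicator g y ≤ (f '' s).indicator (fun y => n * g y) y := by
  by_cases hy : y ∈ f '' s
  · rw [indicator_of_mem hy]
    have hcard : {i | y ∈ f '' S i}.encard ≤ n := by
      have : Nonempty X := ⟨hy.choose⟩
      have hpreimage : ∀ i ∈ {i | y ∈ f '' S i}, ∃ x, x ∈ S i ∧ f x = y := fun i hi => hi
      choose! p hp using hpreimage
      refine (encard_le_encard_of_injOn (f := p) (fun i hi => ?_) fun i hi j hj hij => ?_).trans
        (hn y)
      · exact ⟨hSs ▸ mem_iUnion_of_mem i (hp i hi).1, (hp i hi).2⟩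
      · by_contra hne
        exact disjoint_left.1 (hS hne) (hp i hi).1 (hij ▸ (hp j hj).1)
    calc ∑' i, (f '' S i).indicator g y = ∑' i, {i | y ∈ f '' S i}.indicator (fun _ => g y) i := rfl
      _ = {i | y ∈ f '' S i}.encard * g y := by rw [← tsum_subtype, ENNReal.tsum_set_const]
      _ ≤ n * g y := by
        gcongr
        exact_mod_cast ENat.toENNReal_le.2 hcard
  · have hy' (i : ℕ) : y ∉ f '' S i := fun h =>
      hy (image_mono (hSs ▸ subset_iUnion S i) h)
    simp only [indicator_of_notMem (hy' _), tsum_zero, zero_le]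

lemma lintegral_abs_det_fderiv_mul_le {E : Type*} [NormedAddCommGroup E] [NormedSpace ℝ E]
    [FiniteDimensional ℝ E] [MeasurableSpace E] [BorelSpace E] (μ : Measure E) [μ.IsAddHaarMeasure]
    {f : E → E} {f' : E → E →L[ℝ] E} {s : Set E} (hs : MeasurableSet s)
    (hf : ∀ x ∈ s, HasFDerivWithinAt f (f' x) s x) (hinj : ∀ x ∈ s, ∃ V ∈ 𝓝 x, InjOn f V) {n : ℕ}
    (hn : ∀ y, (s ∩ f ⁻¹' {y}).encard ≤ n) {g : E → ℝ≥0∞} (hg : Measurable g) :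
    ∫⁻ x in s, ENNReal.ofReal |(f' x).det| * g (f x) ∂μ ≤ n * ∫⁻ y in f '' s, g y ∂μ := by
  obtain ⟨S, hS_meas, hS_disj, hS_inj, hS⟩ := exists_measurable_partition_injOn hs hinj
  have hSs (i : ℕ) : S i ⊆ s := hS ▸ subset_iUnion S i
  have hfS (i : ℕ) : ∀ x ∈ S i, HasFDerivWithinAt f (f' x) (S i) x := fun x hx =>
    (hf x (hSs i hx)).mono (hSs i)
  have himage (i : ℕ) : MeasurableSet (f '' S i) :=
    measurable_image_of_fderivWithin (hS_meas i) (hfS i) (hS_inj i)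
  have himage_s : MeasurableSet (f '' s) := by
    rw [← hS, image_iUnion]
    exact .iUnion himage
  calc ∫⁻ x in s, ENNReal.ofReal |(f' x).det| * g (f x) ∂μ
      = ∑' i, ∫⁻ x in S i, ENNReal.ofReal |(f' x).det| * g (f x) ∂μ := by
        rw [← lintegral_iUnion hS_meas hS_disj, hS]
    _ = ∑' i, ∫⁻ y, (f '' S i).indicator g y ∂μ := tsum_congr fun i => by
        rw [lintegral_indicator (himage i), lintegral_image_eq_lintegral_abs_det_fderiv_mul μ
          (hS_meas i) (hfS i) (hS_inj i)]
    _ = ∫⁻ y, ∑' i, (f '' S i).indicator g y ∂μ :=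
        (lintegral_tsum fun i => (hg.indicator (himage i)).aemeasurable).symm
    _ ≤ ∫⁻ y, (f '' s).indicator (fun y => n * g y) y ∂μ :=
        lintegral_mono (tsum_indicator_image_le hS_disj hS hn g)
    _ = n * ∫⁻ y in f '' s, g y ∂μ := by
        rw [lintegral_indicator himage_s, lintegral_const_mul _ hg]

lemma det_restrictScalars_toSpanSingleton (c : ℂ) :
    ((ContinuousLinearMap.toSpanSingleton ℂ c).restrictScalars ℝ : ℂ →L[ℝ] ℂ).det = ‖c‖ ^ 2 := by
  have hdet : (ContinuousLinearMap.toSpanSingleton ℂ c).toLinearMap.det = c :=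
    ContinuousLinearMap.det_toSpanSingleton c
  calc ((ContinuousLinearMap.toSpanSingleton ℂ c).restrictScalars ℝ : ℂ →L[ℝ] ℂ).det
      = Algebra.norm ℝ (ContinuousLinearMap.toSpanSingleton ℂ c).toLinearMap.det :=
        LinearMap.det_restrictScalars
    _ = ‖c‖ ^ 2 := by rw [hdet, Algebra.norm_complex_apply, Complex.normSq_eq_norm_sq]

lemma exists_mem_nhds_injOn_of_hasStrictDerivAt {φ : ℂ → ℂ} {φ' z : ℂ}
    (hφ : HasStrictDerivAt φ φ' z) (hφ' : φ' ≠ 0) : ∃ V ∈ 𝓝 z, InjOn φ V := by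
  have h := hφ.hasStrictFDerivAt_equiv hφ'
  exact ⟨(h.toOpenPartialHomeomorph φ).source,
    (h.toOpenPartialHomeomorph φ).open_source.mem_nhds h.mem_toOpenPartialHomeomorph_source,
    (h.toOpenPartialHomeomorph φ).injOn⟩

theorem lintegral_enorm_deriv_sq_mul_comp_le {φ : ℂ → ℂ} {U : Set ℂ} (hU : IsOpen U)
    (hφ : DifferentiableOn ℂ φ U) {n : ℕ} (hn : ∀ w, (U ∩ φ ⁻¹' {w}).encard ≤ n)
    {g : ℂ → ℝ≥0∞} (hg : Measurable g) :
    ∫⁻ z in U, ‖deriv φ z‖ₑ ^ 2 * g (φ z) ≤ n * ∫⁻ w in φ '' U, g w := by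
  have hR : MeasurableSet {z | deriv φ z ≠ 0} :=
    measurable_deriv φ (measurableSet_singleton 0).compl
  have hderiv : ∀ z ∈ U ∩ {z | deriv φ z ≠ 0}, HasFDerivWithinAt φ
      ((ContinuousLinearMap.toSpanSingleton ℂ (deriv φ z)).restrictScalars ℝ)
      (U ∩ {z | deriv φ z ≠ 0}) z := fun z hz =>
    ((hφ.differentiableAt (hU.mem_nhds hz.1)).hasDerivAt.hasFDerivAt.restrictScalars
      ℝ).hasFDerivWithinAt
  calc ∫⁻ z in U, ‖deriv φ z‖ₑ ^ 2 * g (φ z)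
      = ∫⁻ z in U ∩ {z | deriv φ z ≠ 0}, ‖deriv φ z‖ₑ ^ 2 * g (φ z) := by
        rw [inter_comm, ← Measure.restrict_restrict hR, ← lintegral_indicator hR]
        refine lintegral_congr fun z => ?_
        by_cases hz : deriv φ z = 0 <;> simp [hz]
    _ = ∫⁻ z in U ∩ {z | deriv φ z ≠ 0}, ENNReal.ofReal |((ContinuousLinearMap.toSpanSingleton ℂ
          (deriv φ z)).restrictScalars ℝ : ℂ →L[ℝ] ℂ).det| * g (φ z) := by
        simp only [det_restrictScalars_toSpanSingleton, abs_pow, abs_norm,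
          ENNReal.ofReal_pow (norm_nonneg _), ofReal_norm]
    _ ≤ n * ∫⁻ w in φ '' (U ∩ {z | deriv φ z ≠ 0}), g w :=
        lintegral_abs_det_fderiv_mul_le volume (hU.measurableSet.inter hR) hderiv
          (fun z hz => exists_mem_nhds_injOn_of_hasStrictDerivAt
            (hφ.analyticAt (hU.mem_nhds hz.1)).hasStrictDerivAt hz.2)
          (fun w => (encard_mono (by gcongr; exact inter_subset_left)).trans (hn w)) hg
    _ ≤ n * ∫⁻ w in φ '' U, g w := by
        gcongr
        exact inter_subset_left

end AreaFormula

section BlaschkeProducts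

/-- The Blaschke factor of the disc vanishing at `a`. -/
def blaschkeFactor (a z : ℂ) : ℂ := (a - z) / (1 - conj a * z)

/-- Comparison of Szegő kernels: `1 - z * conj w` controls `1 - φ z * conj (φ w)` on the disc, up
to the factor `A`. -/
def SzegoComparable (A : ℝ) (φ : ℂ → ℂ) : Prop :=
  ∀ z ∈ unitDisc, ∀ w ∈ unitDisc, ‖1 - φ z * conj (φ w)‖ ≤ A * ‖1 - z * conj w‖

variable {a z w : ℂ}

lemma one_sub_norm_le_norm_one_sub_conj_mul (hz : z ∈ unitDisc) : 1 - ‖a‖ ≤ ‖1 - conj a * z‖ := by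
  have hle := norm_sub_norm_le 1 (conj a * z)
  rw [norm_one, norm_mul, RCLike.norm_conj] at hle
  have hmul := mul_le_of_le_one_right (norm_nonneg a) (mem_unitDisc.1 hz).le
  linarith

lemma one_sub_conj_mul_ne_zero (ha : a ∈ unitDisc) (hz : z ∈ unitDisc) : 1 - conj a * z ≠ 0 :=
  norm_pos_iff.1 ((sub_pos.2 (mem_unitDisc.1 ha)).trans_le
    (one_sub_norm_le_norm_one_sub_conj_mul hz))

lemma one_sub_blaschkeFactor_mul_conj (ha : a ∈ unitDisc) (hz : z ∈ unitDisc) (hw : w ∈ unitDisc) :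
    1 - blaschkeFactor a z * conj (blaschkeFactor a w) =
      (1 - a * conj a) * (1 - z * conj w) / ((1 - conj a * z) * conj (1 - conj a * w)) := by
  have hz0 := one_sub_conj_mul_ne_zero ha hz
  have hw0 : conj (1 - conj a * w) ≠ 0 := (map_ne_zero _).2 (one_sub_conj_mul_ne_zero ha hw)
  rw [blaschkeFactor, blaschkeFactor, map_div₀, div_mul_div_comm, one_sub_div (mul_ne_zero hz0 hw0)]
  simp only [map_sub, map_mul, map_one, conj_conj]
  ring

lemma blaschkeFactor_mem_unitDisc (ha : a ∈ unitDisc) (hz : z ∈ unitDisc) :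
    blaschkeFactor a z ∈ unitDisc := by
  have h := one_sub_blaschkeFactor_mul_conj ha hz hz
  simp only [Complex.mul_conj, Complex.normSq_eq_norm_sq] at h
  have hnorm : 1 - ‖blaschkeFactor a z‖ ^ 2 =
      (1 - ‖a‖ ^ 2) * (1 - ‖z‖ ^ 2) / ‖1 - conj a * z‖ ^ 2 := by exact_mod_cast h
  have hden := norm_pos_iff.2 (one_sub_conj_mul_ne_zero ha hz)
  have ha' : 0 < 1 - ‖a‖ ^ 2 := sub_pos.2 ((sq_lt_one_iff₀ (norm_nonneg a)).2 (mem_unitDisc.1 ha))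
  have hz' : 0 < 1 - ‖z‖ ^ 2 := sub_pos.2 ((sq_lt_one_iff₀ (norm_nonneg z)).2 (mem_unitDisc.1 hz))
  rw [mem_unitDisc, ← sq_lt_one_iff₀ (norm_nonneg _), ← sub_pos, hnorm]
  positivity

lemma szegoComparable_blaschkeFactor (ha : a ∈ unitDisc) :
    SzegoComparable (2 / (1 - ‖a‖) ^ 2) (blaschkeFactor a) := fun z hz w hw => by
  have ha' : 0 < 1 - ‖a‖ := sub_pos.2 (mem_unitDisc.1 ha)
  have hnum : ‖1 - a * conj a‖ ≤ 2 := by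
    refine (norm_sub_le _ _).trans ?_
    rw [norm_one]
    linarith [norm_mul_conj_lt_one ha ha]
  rw [one_sub_blaschkeFactor_mul_conj ha hz hw, norm_div, norm_mul, norm_mul, RCLike.norm_conj]
  calc ‖1 - a * conj a‖ * ‖1 - z * conj w‖ / (‖1 - conj a * z‖ * ‖1 - conj a * w‖)
      ≤ 2 * ‖1 - z * conj w‖ / ((1 - ‖a‖) * (1 - ‖a‖)) := by
        gcongr <;> exact one_sub_norm_le_norm_one_sub_conj_mul ‹_›
    _ = 2 / (1 - ‖a‖) ^ 2 * ‖1 - z * conj w‖ := by ring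

lemma szegoComparable_const {c : ℂ} (hc : ‖c‖ = 1) : SzegoComparable 0 fun _ => c :=
  fun z _ w _ => by simp [Complex.mul_conj, Complex.normSq_eq_norm_sq, hc]

lemma SzegoComparable.mono {φ : ℂ → ℂ} {A A' : ℝ} (hφ : SzegoComparable A φ) (hA : A ≤ A') :
    SzegoComparable A' φ := fun z hz w hw => (hφ z hz w hw).trans (by gcongr)

lemma SzegoComparable.congr {φ ψ : ℂ → ℂ} {A : ℝ} (hφ : SzegoComparable A φ)
    (h : EqOn φ ψ unitDisc) : SzegoComparable A ψ := fun z hz w hw => by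
  rw [← h hz, ← h hw]
  exact hφ z hz w hw

lemma SzegoComparable.mul {φ ψ : ℂ → ℂ} {A A' : ℝ} (hφ : SzegoComparable A φ)
    (hψ : SzegoComparable A' ψ) (hφ_le : ∀ z ∈ unitDisc, ‖φ z‖ ≤ 1) :
    SzegoComparable (A + A') fun z => φ z * ψ z := fun z hz w hw => calc
  ‖1 - φ z * ψ z * conj (φ w * ψ w)‖
      = ‖(1 - φ z * conj (φ w)) + φ z * conj (φ w) * (1 - ψ z * conj (ψ w))‖ := by
        rw [map_mul]
        ring_nf
  _ ≤ ‖1 - φ z * conj (φ w)‖ + ‖φ z‖ * ‖φ w‖ * ‖1 - ψ z * conj (ψ w)‖ := by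
        refine (norm_add_le _ _).trans_eq ?_
        rw [norm_mul, norm_mul, RCLike.norm_conj]
  _ ≤ A * ‖1 - z * conj w‖ + 1 * (A' * ‖1 - z * conj w‖) := by
        gcongr
        · exact hφ z hz w hw
        · exact mul_le_one₀ (hφ_le z hz) (norm_nonneg _) (hφ_le w hw)
        · exact hψ z hz w hw
  _ = (A + A') * ‖1 - z * conj w‖ := by ring

lemma SzegoComparable.prod {ι : Type*} {φ : ι → ℂ → ℂ} {A : ι → ℝ} (s : Finset ι)
    (hφ : ∀ i, SzegoComparable (A i) (φ i)) (hφ_le : ∀ i, ∀ z ∈ unitDisc, ‖φ i z‖ ≤ 1) :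
    SzegoComparable (∑ i ∈ s, A i) fun z => ∏ i ∈ s, φ i z := by
  classical
  induction s using Finset.induction_on with
  | empty => simpa using szegoComparable_const norm_one
  | insert i s hi ih =>
    simp only [Finset.prod_insert hi, Finset.sum_insert hi]
    exact (hφ i).mul ih (hφ_le i)

open Polynomial in
/-- The polynomial in `z` obtained from `c * ∏ j, blaschkeFactor (a j) z = w` by clearing
denominators. -/
def blaschkeEquation {n : ℕ} (c : ℂ) (a : Fin n → ℂ) (w : ℂ) : ℂ[X] :=
  C c * ∏ j, (C (a j) - X) - C w * ∏ j, (1 - C (conj (a j)) * X)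

variable {n : ℕ} {c : ℂ} {b : Fin n → ℂ}

lemma eval_blaschkeEquation (c : ℂ) (b : Fin n → ℂ) (w z : ℂ) : (blaschkeEquation c b w).eval z =
    c * ∏ j, (b j - z) - w * ∏ j, (1 - conj (b j) * z) := by
  simp [blaschkeEquation, Polynomial.eval_prod]

lemma natDegree_blaschkeEquation_le (c : ℂ) (b : Fin n → ℂ) (w : ℂ) :
    (blaschkeEquation c b w).natDegree ≤ n := by
  have hprod {p : Fin n → Polynomial ℂ} (hp : ∀ j, (p j).natDegree ≤ 1) :
      (∏ j, p j).natDegree ≤ n :=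
    (Polynomial.natDegree_prod_le _ _).trans
      ((Finset.sum_le_card_nsmul _ _ 1 fun j _ => hp j).trans (by simp))
  refine (Polynomial.natDegree_sub_le _ _).trans (max_le ?_ ?_)
  · exact (Polynomial.natDegree_C_mul_le _ _).trans (hprod fun j => by compute_degree)
  · exact (Polynomial.natDegree_C_mul_le _ _).trans (hprod fun j => by compute_degree)

-- At `z = 1` the two products have the same modulus, so the value there has modulus at least
-- `(1 - ‖w‖) * ∏ j, ‖b j - 1‖ > 0`.
lemma blaschkeEquation_ne_zero (hc : ‖c‖ = 1) (hb : ∀ j, b j ∈ unitDisc) (hw : w ∈ unitDisc) :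
    blaschkeEquation c b w ≠ 0 := fun h => by
  have heval := eval_blaschkeEquation c b w 1
  rw [h, Polynomial.eval_zero, eq_comm, sub_eq_zero] at heval
  have hnorm : ‖∏ j, (1 - conj (b j) * 1)‖ = ‖∏ j, (b j - 1)‖ := by
    rw [norm_prod, norm_prod]
    refine Finset.prod_congr rfl fun j _ => ?_
    rw [mul_one, ← RCLike.norm_conj, map_sub, conj_conj, map_one, norm_sub_rev]
  have hpos : 0 < ‖∏ j, (b j - 1)‖ := by
    refine norm_pos_iff.2 (Finset.prod_ne_zero_iff.2 fun j _ => sub_ne_zero.2 fun hj => ?_)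
    simpa [hj, mem_unitDisc] using hb j
  have hlt := mul_lt_of_lt_one_left hpos (mem_unitDisc.1 hw)
  rw [← hnorm, ← norm_mul, ← heval, norm_mul, hc, one_mul, hnorm] at hlt
  exact lt_irrefl _ hlt

lemma encard_blaschke_fiber_le (hc : ‖c‖ = 1) (hb : ∀ j, b j ∈ unitDisc) (hw : w ∈ unitDisc) :
    (unitDisc ∩ (fun z => c * ∏ j, blaschkeFactor (b j) z) ⁻¹' {w}).encard ≤ n := by
  have hP := blaschkeEquation_ne_zero hc hb hw
  have hroots : unitDisc ∩ (fun z => c * ∏ j, blaschkeFactor (b j) z) ⁻¹' {w} ⊆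
      (blaschkeEquation c b w).roots.toFinset := by
    rintro z ⟨hz, rfl⟩
    have hden : ∏ j, (1 - conj (b j) * z) ≠ 0 :=
      Finset.prod_ne_zero_iff.2 fun j _ => one_sub_conj_mul_ne_zero (hb j) hz
    rw [Finset.mem_coe, Multiset.mem_toFinset, Polynomial.mem_roots hP, Polynomial.IsRoot,
      eval_blaschkeEquation]
    simp only [blaschkeFactor, Finset.prod_div_distrib]
    rw [mul_assoc, div_mul_cancel₀ _ hden, sub_self]
  refine (encard_mono hroots).trans ?_
  rw [encard_coe_eq_coe_finsetCard]
  exact_mod_cast (Multiset.toFinset_card_le _).trans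
    ((Polynomial.card_roots' _).trans (natDegree_blaschkeEquation_le c b w))

variable {B : ℂ → ℂ}

lemma IsFiniteBlaschke.differentiableOn (hB : IsFiniteBlaschke B) :
    DifferentiableOn ℂ B unitDisc := by
  obtain ⟨θ, n, b, hb, hB⟩ := hB
  refine DifferentiableOn.congr ?_ hB
  refine (DifferentiableOn.fun_finsetProd fun j _ => ?_).const_mul _
  exact DifferentiableOn.div (by fun_prop) (by fun_prop) fun z hz =>
    one_sub_conj_mul_ne_zero (mem_unitDisc.2 (hb j)) hz

lemma IsFiniteBlaschke.mapsTo_or_forall_notMem (hB : IsFiniteBlaschke B) :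
    MapsTo B unitDisc unitDisc ∨ ∀ z ∈ unitDisc, B z ∉ unitDisc := by
  obtain ⟨θ, n, b, hb, hB⟩ := hB
  cases n with
  | zero =>
    refine .inr fun z hz => ?_
    rw [mem_unitDisc, hB z hz, Finset.univ_eq_empty, Finset.prod_empty, mul_one,
      norm_exp_ofReal_mul_I]
    exact lt_irrefl 1
  | succ n =>
    refine .inl fun z hz => ?_
    have hfactor (j : Fin (n + 1)) := mem_unitDisc.1
      (blaschkeFactor_mem_unitDisc (mem_unitDisc.2 (hb j)) hz)
    rw [mem_unitDisc, hB z hz, norm_mul, norm_exp_ofReal_mul_I, one_mul, norm_prod,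
      Fin.prod_univ_succ]
    exact mul_lt_one_of_nonneg_of_lt_one_left (norm_nonneg _) (hfactor 0)
      (Finset.prod_le_one (fun j _ => norm_nonneg _) fun j _ => (hfactor j.succ).le)

lemma IsFiniteBlaschke.exists_szegoComparable (hB : IsFiniteBlaschke B) :
    ∃ A, 1 ≤ A ∧ SzegoComparable A B := by
  obtain ⟨θ, n, b, hb, hB⟩ := hB
  have hb' (j : Fin n) : b j ∈ unitDisc := mem_unitDisc.2 (hb j)
  have hprod := SzegoComparable.prod Finset.univ
    (fun j => szegoComparable_blaschkeFactor (hb' j))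
    fun j z hz => (mem_unitDisc.1 (blaschkeFactor_mem_unitDisc (hb' j) hz)).le
  have hc := norm_exp_ofReal_mul_I θ
  have h := (szegoComparable_const hc).mul hprod fun _ _ => hc.le
  exact ⟨_, le_max_left _ _, (h.congr fun z hz => (hB z hz).symm).mono (le_max_right _ _)⟩

lemma IsFiniteBlaschke.exists_encard_fiber_le (hB : IsFiniteBlaschke B)
    (hmaps : MapsTo B unitDisc unitDisc) :
    ∃ n : ℕ, ∀ w, (unitDisc ∩ B ⁻¹' {w}).encard ≤ n := by
  obtain ⟨θ, n, b, hb, hB⟩ := hB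
  refine ⟨n, fun w => ?_⟩
  rcases (unitDisc ∩ B ⁻¹' {w}).eq_empty_or_nonempty with hempty | ⟨z, hz, rfl⟩
  · rw [hempty, encard_empty]
    exact zero_le
  · have hfiber : unitDisc ∩ B ⁻¹' {B z} ⊆
        unitDisc ∩ (fun z => exp (θ * I) * ∏ j, blaschkeFactor (b j) z) ⁻¹' {B z} := fun x hx =>
      ⟨hx.1, (hB x hx.1).symm.trans hx.2⟩
    exact (encard_mono hfiber).trans (encard_blaschke_fiber_le (norm_exp_ofReal_mul_I θ)
      (fun j => mem_unitDisc.2 (hb j)) (hmaps hz))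

end BlaschkeProducts

section Multipliers

variable {u φ f : ℂ → ℂ} {z w : ℂ} {A M : ℝ} {n : ℕ}

lemma lintegral_enorm_add_sq_le {α E : Type*} [MeasurableSpace α] {μ : Measure α}
    [NormedAddCommGroup E] {F G : α → E} (hF : AEStronglyMeasurable F μ) :
    ∫⁻ x, ‖F x + G x‖ₑ ^ 2 ∂μ ≤ 2 * (∫⁻ x, ‖F x‖ₑ ^ 2 ∂μ + ∫⁻ x, ‖G x‖ₑ ^ 2 ∂μ) := by
  rw [← lintegral_add_left' (hF.enorm.pow_const 2), ← lintegral_const_mul' _ _ ENNReal.ofNat_ne_top]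
  refine lintegral_mono fun x => ?_
  have h : ‖F x + G x‖₊ ^ 2 ≤ 2 * (‖F x‖₊ ^ 2 + ‖G x‖₊ ^ 2) := calc
    ‖F x + G x‖₊ ^ 2 ≤ (‖F x‖₊ + ‖G x‖₊) ^ 2 := by gcongr; exact nnnorm_add_le _ _
    _ ≤ 2 * (‖F x‖₊ ^ 2 + ‖G x‖₊ ^ 2) := add_sq_le
  simpa only [enorm_eq_nnnorm, ENNReal.coe_mul, ENNReal.coe_pow, ENNReal.coe_add,
    ENNReal.coe_ofNat] using ENNReal.coe_le_coe.2 h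

lemma MemDirichlet.norm_sq_le (hf : MemDirichlet f) (hz : z ∈ unitDisc) :
    ‖f z‖ ^ 2 ≤ dirNormSq f * ‖dirichletKernel z‖ ^ 2 := by
  obtain ⟨v, hv, hvf⟩ := hf.exists_inner_dirichletKernel_eq
  rw [← hvf z hz, ← hv, mul_comm, ← mul_pow]
  gcongr
  exact norm_inner_le_norm _ _

lemma memDirichlet_mul_of_norm_sq_le (hu : DifferentiableOn ℂ u unitDisc)
    (hM : ∀ z ∈ unitDisc, ‖u z‖ ^ 2 ≤ M) (hf : MemDirichlet f)
    (huf : ∫⁻ z in unitDisc, ‖deriv u z * f z‖ₑ ^ 2 ≠ ∞) :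
    MemDirichlet fun z => u z * f z := by
  rw [memDirichlet_iff_lintegral_ne_top] at hf ⊢
  refine ⟨hu.mul hf.1, ne_top_of_le_ne_top ?_ (calc
    ∫⁻ z in unitDisc, ‖deriv (fun z => u z * f z) z‖ₑ ^ 2
      = ∫⁻ z in unitDisc, ‖deriv u z * f z + u z * deriv f z‖ₑ ^ 2 :=
        setLIntegral_congr_fun measurableSet_unitDisc fun z hz => by
          have hz' := isOpen_unitDisc.mem_nhds hz
          simp only [deriv_fun_mul (hu.differentiableAt hz') (hf.1.differentiableAt hz')]
    _ ≤ 2 * ((∫⁻ z in unitDisc, ‖deriv u z * f z‖ₑ ^ 2) +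
          ∫⁻ z in unitDisc, ‖u z * deriv f z‖ₑ ^ 2) :=
        lintegral_enorm_add_sq_le (F := fun z => deriv u z * f z)
          (((hu.deriv isOpen_unitDisc).mul hf.1).continuousOn
            |>.aestronglyMeasurable measurableSet_unitDisc)
    _ ≤ 2 * ((∫⁻ z in unitDisc, ‖deriv u z * f z‖ₑ ^ 2) +
          ENNReal.ofReal M * ∫⁻ z in unitDisc, ‖deriv f z‖ₑ ^ 2) := by
        gcongr
        rw [← lintegral_const_mul' _ _ ENNReal.ofReal_ne_top]
        refine setLIntegral_mono' measurableSet_unitDisc fun z hz => ?_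
        rw [enorm_mul, mul_pow, ← ofReal_norm (u z), ← ENNReal.ofReal_pow (norm_nonneg _)]
        gcongr
        exact hM z hz)⟩
  exact ENNReal.mul_ne_top ENNReal.ofNat_ne_top
    (ENNReal.add_ne_top.2 ⟨huf, ENNReal.mul_ne_top ENNReal.ofReal_ne_top hf.2⟩)

lemma norm_inner_dirichletKernel_le (hA : 1 ≤ A) (hφ : MapsTo φ unitDisc unitDisc)
    (hAφ : SzegoComparable A φ) (hz : z ∈ unitDisc) (hw : w ∈ unitDisc) :
    ‖inner ℂ (dirichletKernel z) (dirichletKernel w)‖ ≤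
      (17 + 4 * Real.log A) * (inner ℂ (dirichletKernel (φ z)) (dirichletKernel (φ w))).re := by
  rw [inner_dirichletKernel hz hw, inner_dirichletKernel (hφ hz) (hφ hw)]
  exact norm_logKernel_le hA (norm_mul_conj_lt_one hz hw) (norm_mul_conj_lt_one (hφ hz) (hφ hw))
    (hAφ z hz w hw)

lemma WCOBounded.memDirichlet (hW : WCOBounded u φ) : MemDirichlet u := by
  obtain ⟨C, -, hC⟩ := hW
  simpa only [mul_one] using (hC _ (memDirichlet_const 1)).1

-- A function supported off the disc is zero in `𝒟`, yet its values outside enter `f ∘ φ`.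
lemma WCOBounded.eq_zero_of_notMem (hW : WCOBounded u φ) (hz : z ∈ unitDisc)
    (hφz : φ z ∉ unitDisc) : u z = 0 := by
  obtain ⟨C, -, hC⟩ := hW
  set g : ℂ → ℂ := unitDiscᶜ.indicator 1 with hg
  have hg_zero : EqOn (fun _ => 0) g unitDisc := fun w hw =>
    (indicator_of_notMem (notMem_compl_iff.2 hw) _).symm
  obtain ⟨hWg, hWg_le⟩ := hC g ((memDirichlet_const 0).congr hg_zero)
  have hnorm : dirNormSq g = 0 := by
    rw [← dirNormSq_congr hg_zero]
    simp [dirNormSq]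
  have h := hWg.norm_sq_le hz
  rw [hnorm, mul_zero] at hWg_le
  have hu : ‖u z * g (φ z)‖ ^ 2 ≤ 0 :=
    h.trans (mul_nonpos_of_nonpos_of_nonneg hWg_le (sq_nonneg _))
  simpa [hg, hφz] using hu

lemma WCOBounded.exists_norm_sq_le (hW : WCOBounded u φ) (hφ : MapsTo φ unitDisc unitDisc)
    (hA : 1 ≤ A) (hAφ : SzegoComparable A φ) :
    ∃ M, ∀ z ∈ unitDisc, ‖u z‖ ^ 2 ≤ M := by
  obtain ⟨C, hC, hWC⟩ := hW
  refine ⟨C * (17 + 4 * Real.log A), fun z hz => ?_⟩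
  set k := dirichletKernel (φ z) with hk
  have hk_pos : 0 < ‖k‖ ^ 4 := pow_pos (norm_pos_iff.2 (dirichletKernel_ne_zero (hφ hz))) 4
  have hkz : ‖dirichletKernel z‖ ^ 2 ≤ (17 + 4 * Real.log A) * ‖k‖ ^ 2 := by
    have h := norm_inner_dirichletKernel_le hA hφ hAφ hz hz
    rwa [inner_self_eq_norm_sq_to_K, norm_pow, RCLike.norm_ofReal, abs_norm,
      ← RCLike.re_eq_complex_re, inner_self_eq_norm_sq] at h
  obtain ⟨hmem, hnorm⟩ := inner_dirichletKernel_memDirichlet k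
  obtain ⟨hWmem, hWnorm⟩ := hWC _ hmem
  refine le_of_mul_le_mul_right ?_ hk_pos
  calc ‖u z‖ ^ 2 * ‖k‖ ^ 4 = ‖u z * inner ℂ (dirichletKernel (φ z)) k‖ ^ 2 := by
        rw [← hk, inner_self_eq_norm_sq_to_K, norm_mul, norm_pow, RCLike.norm_ofReal, abs_norm]
        ring
    _ ≤ C * ‖k‖ ^ 2 * ‖dirichletKernel z‖ ^ 2 := (hWmem.norm_sq_le hz).trans (by
        rw [← hnorm]
        gcongr)
    _ ≤ C * ‖k‖ ^ 2 * ((17 + 4 * Real.log A) * ‖k‖ ^ 2) := by gcongr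
    _ = C * (17 + 4 * Real.log A) * ‖k‖ ^ 4 := by ring

lemma lintegral_enorm_mul_deriv_comp_sq_le (hφ : DifferentiableOn ℂ φ unitDisc)
    (hmaps : MapsTo φ unitDisc unitDisc) (hn : ∀ w, (unitDisc ∩ φ ⁻¹' {w}).encard ≤ n)
    (hM : ∀ z ∈ unitDisc, ‖u z‖ ^ 2 ≤ M) (hf : MemDirichlet f) :
    ∫⁻ z in unitDisc, ‖u z * (deriv f (φ z) * deriv φ z)‖ₑ ^ 2 ≤
      ENNReal.ofReal M * (n * ENNReal.ofReal (Real.pi * dirNormSq f)) := calc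
  ∫⁻ z in unitDisc, ‖u z * (deriv f (φ z) * deriv φ z)‖ₑ ^ 2
    ≤ ∫⁻ z in unitDisc, ENNReal.ofReal M * (‖deriv φ z‖ₑ ^ 2 * ‖deriv f (φ z)‖ₑ ^ 2) := by
      refine setLIntegral_mono' measurableSet_unitDisc fun z hz => ?_
      rw [enorm_mul, enorm_mul, mul_pow, mul_pow, mul_comm (‖deriv φ z‖ₑ ^ 2), ← ofReal_norm (u z),
        ← ENNReal.ofReal_pow (norm_nonneg _)]
      gcongr
      exact hM z hz
  _ ≤ ENNReal.ofReal M * (n * ∫⁻ w in φ '' unitDisc, ‖deriv f w‖ₑ ^ 2) := by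
      rw [lintegral_const_mul' _ _ ENNReal.ofReal_ne_top]
      gcongr
      exact lintegral_enorm_deriv_sq_mul_comp_le isOpen_unitDisc hφ hn
        ((measurable_deriv f).enorm.pow_const 2)
  _ ≤ ENNReal.ofReal M * (n * ENNReal.ofReal (Real.pi * dirNormSq f)) := by
      gcongr
      exact (lintegral_mono_set hmaps.image_subset).trans hf.lintegral_enorm_deriv_sq_le

lemma deriv_mul_comp (hu : DifferentiableAt ℂ u z) (hφ : DifferentiableAt ℂ φ z)
    (hf : DifferentiableAt ℂ f (φ z)) : deriv (fun z => u z * f (φ z)) z =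
      deriv u z * f (φ z) + u z * (deriv f (φ z) * deriv φ z) :=
  (hu.hasDerivAt.mul (hf.hasDerivAt.comp z hφ.hasDerivAt)).deriv

lemma WCOBounded.exists_lintegral_enorm_deriv_mul_comp_sq_le (hW : WCOBounded u φ)
    (hφ : DifferentiableOn ℂ φ unitDisc) (hmaps : MapsTo φ unitDisc unitDisc)
    (hn : ∀ w, (unitDisc ∩ φ ⁻¹' {w}).encard ≤ n) (hM : ∀ z ∈ unitDisc, ‖u z‖ ^ 2 ≤ M) :
    ∃ K, 0 < K ∧ ∀ f, MemDirichlet f →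
      ∫⁻ z in unitDisc, ‖deriv u z * f (φ z)‖ₑ ^ 2 ≤ ENNReal.ofReal (K * dirNormSq f) := by
  have hM0 : 0 ≤ M := (sq_nonneg _).trans (hM 0 (mem_ball_self one_pos))
  have hu := hW.memDirichlet.1
  obtain ⟨C, hC, hWC⟩ := hW
  refine ⟨2 * Real.pi * (C + M * n + 1), by positivity, fun f hf => ?_⟩
  obtain ⟨hmem, hle⟩ := hWC f hf
  have hnonneg := dirNormSq_nonneg f
  have hprod : ∀ z ∈ unitDisc, deriv u z * f (φ z) =
      deriv (fun z => u z * f (φ z)) z + -(u z * (deriv f (φ z) * deriv φ z)) := fun z hz => by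
    rw [deriv_mul_comp (hu.differentiableAt (isOpen_unitDisc.mem_nhds hz))
      (hφ.differentiableAt (isOpen_unitDisc.mem_nhds hz))
      (hf.1.differentiableAt (isOpen_unitDisc.mem_nhds (hmaps hz))), add_neg_cancel_right]
  calc ∫⁻ z in unitDisc, ‖deriv u z * f (φ z)‖ₑ ^ 2
      = ∫⁻ z in unitDisc, ‖deriv (fun z => u z * f (φ z)) z +
          -(u z * (deriv f (φ z) * deriv φ z))‖ₑ ^ 2 :=
        setLIntegral_congr_fun measurableSet_unitDisc fun z hz => by simp only [hprod z hz]
    _ ≤ 2 * ((∫⁻ z in unitDisc, ‖deriv (fun z => u z * f (φ z)) z‖ₑ ^ 2) +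
          ∫⁻ z in unitDisc, ‖u z * (deriv f (φ z) * deriv φ z)‖ₑ ^ 2) := by
        refine (lintegral_enorm_add_sq_le
          (measurable_deriv _).stronglyMeasurable.aestronglyMeasurable).trans_eq ?_
        simp only [enorm_neg]
    _ ≤ 2 * (ENNReal.ofReal (Real.pi * (C * dirNormSq f)) +
          ENNReal.ofReal M * (n * ENNReal.ofReal (Real.pi * dirNormSq f))) := by
        gcongr
        · exact hmem.lintegral_enorm_deriv_sq_le.trans (ENNReal.ofReal_le_ofReal (by gcongr))
        · exact lintegral_enorm_mul_deriv_comp_sq_le hφ hmaps hn hM hf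
    _ = ENNReal.ofReal (2 * (Real.pi * (C * dirNormSq f) + M * (n * (Real.pi * dirNormSq f)))) := by
        rw [ENNReal.ofReal_mul zero_le_two, ENNReal.ofReal_add (by positivity) (by positivity),
          ENNReal.ofReal_mul hM0, ENNReal.ofReal_mul (Nat.cast_nonneg n), ENNReal.ofReal_natCast,
          ENNReal.ofReal_ofNat]
    _ ≤ ENNReal.ofReal (2 * Real.pi * (C + M * n + 1) * dirNormSq f) := by
        refine ENNReal.ofReal_le_ofReal ?_
        nlinarith [mul_nonneg Real.pi_pos.le hnonneg]

lemma lintegral_enorm_mul_sq_ne_top_of_comp {ω : ℂ → ℂ} (hω : ContinuousOn ω unitDisc)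
    (hφ : ContinuousOn φ unitDisc) (hmaps : MapsTo φ unitDisc unitDisc) (hA : 1 ≤ A)
    (hAφ : SzegoComparable A φ) {K : ℝ} (hK : 0 < K)
    (hωK : ∀ f, MemDirichlet f →
      ∫⁻ z in unitDisc, ‖ω z * f (φ z)‖ₑ ^ 2 ≤ ENNReal.ofReal (K * dirNormSq f))
    (hf : MemDirichlet f) : ∫⁻ z in unitDisc, ‖ω z * f z‖ₑ ^ 2 ≠ ∞ := by
  obtain ⟨v, -, hvf⟩ := hf.exists_inner_dirichletKernel_eq
  have hk : ContinuousOn (fun z => conj (ω z) • dirichletKernel z) unitDisc :=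
    (continuous_conj.comp_continuousOn hω).smul continuousOn_dirichletKernel
  have hk' : ContinuousOn (fun z => (‖ω z‖ : ℂ) • dirichletKernel (φ z)) unitDisc :=
    (continuous_ofReal.comp_continuousOn hω.norm).smul
      (continuousOn_dirichletKernel.comp hφ hmaps)
  have hlog := Real.log_nonneg hA
  refine ne_top_of_le_ne_top ENNReal.ofReal_ne_top (le_trans (le_of_eq ?_)
    (lintegral_enorm_inner_sq_le_of_norm_inner_le (𝕜 := ℂ) (μ := volume.restrict unitDisc)
      (hk.aestronglyMeasurable measurableSet_unitDisc)
      (hk'.aestronglyMeasurable measurableSet_unitDisc) hK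
      (by positivity : 0 ≤ 17 + 4 * Real.log A) (fun v => ?_) ?_ v))
  · refine setLIntegral_congr_fun measurableSet_unitDisc fun z hz => ?_
    simp only [inner_smul_left, conj_conj, hvf z hz]
  · obtain ⟨hmem, hnorm⟩ := inner_dirichletKernel_memDirichlet v
    simpa only [inner_smul_left, conj_ofReal, enorm_mul, hnorm, ← ofReal_norm (ofReal _),
      norm_real, norm_norm, ofReal_norm] using hωK _ hmem
  · refine ae_restrict_of_forall_mem measurableSet_unitDisc fun z hz =>
      ae_restrict_of_forall_mem measurableSet_unitDisc fun w hw => ?_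
    calc ‖inner ℂ (conj (ω z) • dirichletKernel z) (conj (ω w) • dirichletKernel w)‖
        = ‖ω z‖ * ‖ω w‖ * ‖inner ℂ (dirichletKernel z) (dirichletKernel w)‖ := by
          rw [inner_smul_left, inner_smul_right, norm_mul, norm_mul, conj_conj, RCLike.norm_conj,
            mul_assoc]
      _ ≤ ‖ω z‖ * ‖ω w‖ * ((17 + 4 * Real.log A) *
            (inner ℂ (dirichletKernel (φ z)) (dirichletKernel (φ w))).re) := by
          gcongr
          exact norm_inner_dirichletKernel_le hA hmaps hAφ hz hw
      _ = (17 + 4 * Real.log A) * RCLike.re (inner ℂ ((‖ω z‖ : ℂ) • dirichletKernel (φ z))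
            ((‖ω w‖ : ℂ) • dirichletKernel (φ w))) := by
          rw [inner_smul_left, inner_smul_right, conj_ofReal, RCLike.re_eq_complex_re,
            re_ofReal_mul, re_ofReal_mul]
          ring

theorem WCOBounded.memDirichlet_mul (hW : WCOBounded u φ) (hφ : DifferentiableOn ℂ φ unitDisc)
    (hmaps : MapsTo φ unitDisc unitDisc) (hn : ∀ w, (unitDisc ∩ φ ⁻¹' {w}).encard ≤ n)
    (hA : 1 ≤ A) (hAφ : SzegoComparable A φ) (hf : MemDirichlet f) :
    MemDirichlet fun z => u z * f z := by
  have hu := hW.memDirichlet.1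
  obtain ⟨M, hM⟩ := hW.exists_norm_sq_le hmaps hA hAφ
  obtain ⟨K, hK, hcarleson⟩ := hW.exists_lintegral_enorm_deriv_mul_comp_sq_le hφ hmaps hn hM
  exact memDirichlet_mul_of_norm_sq_le hu hM hf (lintegral_enorm_mul_sq_ne_top_of_comp
    (hu.deriv isOpen_unitDisc).continuousOn hφ.continuousOn hmaps hA hAφ hK hcarleson hf)

lemma memDirichlet_mul_of_forall_eq_zero (hu : ∀ z ∈ unitDisc, u z = 0) (f : ℂ → ℂ) :
    MemDirichlet fun z => u z * f z :=
  (memDirichlet_const 0).congr fun z hz => by simp only [hu z hz, zero_mul]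

end Multipliers

/-- If `B` is a finite Blaschke product, `u ∈ 𝒟`, and the weighted composition
operator `W_{u,B} : f ↦ u·(f∘B)` is bounded on `𝒟`, then `u` is a multiplier
of the Dirichlet space. -/
theorem multiplier_of_wco_bounded_blaschke (B u : ℂ → ℂ)
    (hB : IsFiniteBlaschke B) (hu : MemDirichlet u)
    (hbd : WCOBounded u B) :
    DifferentiableOn ℂ u unitDisc ∧
      ∀ f : ℂ → ℂ, MemDirichlet f → MemDirichlet fun z => u z * f z := by
  refine ⟨hu.1, fun f hf => ?_⟩
  rcases hB.mapsTo_or_forall_notMem with hmaps | hconst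
  · obtain ⟨A, hA, hAB⟩ := hB.exists_szegoComparable
    obtain ⟨n, hn⟩ := hB.exists_encard_fiber_le hmaps
    exact hbd.memDirichlet_mul hB.differentiableOn hmaps hn hA hAB hf
  · exact memDirichlet_mul_of_forall_eq_zero
      (fun z hz => hbd.eq_zero_of_notMem hz (hconst z hz)) f
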